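/- A d-web of hypersurfaces ⟨ω₁, …, ω_d⟩ on U is geodesic for a torsion-free affine connection Γ if and only if there exist smooth 1-forms θ₁, …, θ_d on U such that d^s_Γ ωᵢ = θᵢ·ωᵢ for every i = 1, …, d. -/

import Mathlib

open scoped BigOperators

/-- Partial derivative in the `i`-th coordinate direction. -/
noncomputable def pd {n : ℕ} (i : Fin n) (f : (Fin n → ℝ) → ℝ) (x : Fin n → ℝ) : ℝ :=
  fderiv ℝ f x (Pi.single i 1)

/-- A torsion-free affine connection on `U`, given by its Christoffel symbols `Γ k i j`
(smooth on `U` and symmetric in the lower indices `i j`). -/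
def IsTorsionFreeConn {n : ℕ} (U : Set (Fin n → ℝ))
    (Γ : Fin n → Fin n → Fin n → (Fin n → ℝ) → ℝ) : Prop :=
  (∀ k i j, ContDiffOn ℝ (⊤ : ℕ∞) (Γ k i j) U) ∧ (∀ k i j x, Γ k i j x = Γ k j i x)

/-- `γ` is a geodesic of `Γ` on the set `I ⊆ ℝ`, with image in `U`. -/
def IsGeodesicOn {n : ℕ} (U : Set (Fin n → ℝ))
    (Γ : Fin n → Fin n → Fin n → (Fin n → ℝ) → ℝ)
    (I : Set ℝ) (γ : ℝ → Fin n → ℝ) : Prop :=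
  (∀ t ∈ I, γ t ∈ U) ∧ ContDiffOn ℝ 2 γ I ∧
    ∀ t ∈ I, ∀ k, deriv (fun s => deriv (fun u => γ u k) s) t +
      ∑ i, ∑ j, Γ k i j (γ t) * deriv (fun u => γ u i) t * deriv (fun u => γ u j) t = 0

/-- The codimension-one foliation defined by the `1`-form `ω` is totally geodesic for `Γ`:
every geodesic tangent to a leaf at time `0` stays tangent to the kernel of `ω`. -/
def TotallyGeodesic {n : ℕ} (U : Set (Fin n → ℝ))
    (Γ : Fin n → Fin n → Fin n → (Fin n → ℝ) → ℝ)
    (ω : (Fin n → ℝ) → Fin n → ℝ) : Prop :=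
  ∀ I : Set ℝ, IsOpen I → I.OrdConnected → (0 : ℝ) ∈ I →
    ∀ γ : ℝ → Fin n → ℝ, IsGeodesicOn U Γ I γ →
      (∑ k, ω (γ 0) k * deriv (fun u => γ u k) 0) = 0 →
      ∀ t ∈ I, (∑ k, ω (γ t) k * deriv (fun u => γ u k) t) = 0

/-- `ω` is a smooth nonvanishing `1`-form on `U` satisfying the integrability
condition `ω ∧ dω = 0`. -/
def IsFoliationForm {n : ℕ} (U : Set (Fin n → ℝ)) (ω : (Fin n → ℝ) → Fin n → ℝ) : Prop :=
  ContDiffOn ℝ (⊤ : ℕ∞) ω U ∧ (∀ x ∈ U, ω x ≠ 0) ∧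
    ∀ x ∈ U, ∀ i j k,
      ω x i * (pd j (fun y => ω y k) x - pd k (fun y => ω y j) x) +
      ω x j * (pd k (fun y => ω y i) x - pd i (fun y => ω y k) x) +
      ω x k * (pd i (fun y => ω y j) x - pd j (fun y => ω y i) x) = 0

/-- Components of the symmetric covariant differential `d^s_Γ ω`. -/
noncomputable def dsym {n : ℕ} (Γ : Fin n → Fin n → Fin n → (Fin n → ℝ) → ℝ)
    (ω : (Fin n → ℝ) → Fin n → ℝ) (i j : Fin n) (x : Fin n → ℝ) : ℝ :=
  (pd i (fun y => ω y j) x + pd j (fun y => ω y i) x) / 2 - ∑ k, Γ k i j x * ω x k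

/-- Components of the symmetric product `θ·ω` of two `1`-forms. -/
noncomputable def symProd {n : ℕ} (θ ω : (Fin n → ℝ) → Fin n → ℝ) (i j : Fin n) (x : Fin n → ℝ) : ℝ :=
  (θ x i * ω x j + θ x j * ω x i) / 2

/-- A `d`-web of hypersurfaces on `U`: a family of smooth nonvanishing integrable `1`-forms,
any `n` of which are linearly independent at every point of `U`. -/
def IsWeb {n d : ℕ} (U : Set (Fin n → ℝ)) (ωs : Fin d → (Fin n → ℝ) → Fin n → ℝ) : Prop :=
  (∀ i, IsFoliationForm U (ωs i)) ∧
    ∀ x ∈ U, ∀ σ : Fin n → Fin d, Function.Injective σ →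
      LinearIndependent ℝ (fun i => ωs (σ i) x)

/-- `Γ` and `Γ'` are projectively equivalent on `U`:
`Γ'ᵏᵢⱼ = Γᵏᵢⱼ + δᵏᵢ ρⱼ + δᵏⱼ ρᵢ` for some smooth `1`-form `ρ`. -/
def ProjEquiv {n : ℕ} (U : Set (Fin n → ℝ))
    (Γ Γ' : Fin n → Fin n → Fin n → (Fin n → ℝ) → ℝ) : Prop :=
  ∃ ρ : (Fin n → ℝ) → Fin n → ℝ, ContDiffOn ℝ (⊤ : ℕ∞) ρ U ∧
    ∀ x ∈ U, ∀ k i j, Γ' k i j x =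
      Γ k i j x + (if k = i then ρ x j else 0) + (if k = j then ρ x i else 0)

/-- `X` is the frame of vector fields dual to the coframe `ωs` on `U`. -/
def IsDualFrame {n : ℕ} (U : Set (Fin n → ℝ)) (ωs : Fin n → (Fin n → ℝ) → Fin n → ℝ)
    (X : Fin n → (Fin n → ℝ) → Fin n → ℝ) : Prop :=
  (∀ i, ContDiffOn ℝ (⊤ : ℕ∞) (X i) U) ∧
    ∀ x ∈ U, ∀ i j, (∑ k, ωs i x k * X j x k) = if i = j then 1 else 0

/-- The web invariants `s^a_{ij} = (1/(aᵢ−aⱼ))·(aᵢ ∂ⱼ − aⱼ ∂ᵢ) log (aⱼ/aᵢ)`, where `∂ᵢ`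
is derivation along the frame vector field `X i`. -/
noncomputable def sInv {n : ℕ} (X : Fin n → (Fin n → ℝ) → Fin n → ℝ)
    (a : Fin n → (Fin n → ℝ) → ℝ) (i j : Fin n) (x : Fin n → ℝ) : ℝ :=
  (1 / (a i x - a j x)) *
    (a i x * (fderiv ℝ (a j) x (X j x) / a j x - fderiv ℝ (a i) x (X j x) / a i x) -
     a j x * (fderiv ℝ (a j) x (X i x) / a j x - fderiv ℝ (a i) x (X i x) / a i x))

/-- The curvature tensor `Rᵏₗᵢⱼ` of the connection `Γ`. -/
noncomputable def curv {n : ℕ} (Γ : Fin n → Fin n → Fin n → (Fin n → ℝ) → ℝ)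
    (k l i j : Fin n) (x : Fin n → ℝ) : ℝ :=
  pd i (Γ k j l) x - pd j (Γ k i l) x +
    ∑ m, (Γ k i m x * Γ m j l x - Γ k j m x * Γ m i l x)

/-- Along a geodesic with velocity `v`, the derivative of `ω v` is `(d^s_Γ ω)(v, v)`. -/
theorem IsGeodesicOn.hasDerivAt_form_velocity {n : ℕ} {U : Set (Fin n → ℝ)} (hU : IsOpen U)
    {Γ : Fin n → Fin n → Fin n → (Fin n → ℝ) → ℝ} {I : Set ℝ} (hI : IsOpen I)
    {γ : ℝ → Fin n → ℝ} (hγ : IsGeodesicOn U Γ I γ)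
    {ω : (Fin n → ℝ) → Fin n → ℝ} (hω : ContDiffOn ℝ (⊤ : ℕ∞) ω U) {t : ℝ} (ht : t ∈ I) :
    HasDerivAt (fun s => ∑ k, ω (γ s) k * deriv (fun u => γ u k) s)
      (∑ p, ∑ q, dsym Γ ω p q (γ t) *
        deriv (fun u => γ u p) t * deriv (fun u => γ u q) t) t := by
  obtain ⟨hmem, hγ2, hgeo⟩ := hγ
  have hγk : ∀ k, ContDiffOn ℝ 2 (fun u => γ u k) I := contDiffOn_pi.1 hγ2
  have hd : ∀ k, HasDerivAt (fun u => γ u k) (deriv (fun u => γ u k) t) t := fun k =>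
    (((hγk k).differentiableOn (by norm_num)).differentiableAt (hI.mem_nhds ht)).hasDerivAt
  have hdd : ∀ k, HasDerivAt (fun s => deriv (fun u => γ u k) s)
      (deriv (fun s => deriv (fun u => γ u k) s) t) t := fun k =>
    ((((hγk k).deriv_of_isOpen (m := 1) hI (by norm_num)).differentiableOn
      (by norm_num)).differentiableAt (hI.mem_nhds ht)).hasDerivAt
  set v : Fin n → ℝ := fun k => deriv (fun u => γ u k) t
  have hγt : HasDerivAt γ v t := hasDerivAt_pi.2 hd
  have hωk : ∀ k, HasDerivAt (fun s => ω (γ s) k) (∑ p, v p * pd p (fun y => ω y k) (γ t)) t := by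
    intro k
    have h1 : DifferentiableAt ℝ (fun y => ω y k) (γ t) :=
      ((contDiffOn_pi.1 hω k).differentiableOn (by simp)).differentiableAt
        (hU.mem_nhds (hmem t ht))
    have h2 := h1.hasFDerivAt.comp_hasDerivAt t hγt
    have h3 : fderiv ℝ (fun y => ω y k) (γ t) v = ∑ p, v p * pd p (fun y => ω y k) (γ t) := by
      conv_lhs => rw [pi_eq_sum_univ' v]
      simp only [pd, map_sum, map_smul, smul_eq_mul]
    rw [← h3]
    exact h2
  have hsum := HasDerivAt.fun_sum (u := Finset.univ) fun k _ => (hωk k).mul (hdd k)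
  refine hsum.congr_deriv ?_
  have hacc : ∀ k, deriv (fun s => deriv (fun u => γ u k) s) t =
      - ∑ i, ∑ j, Γ k i j (γ t) * v i * v j := fun k => eq_neg_of_add_eq_zero_left (hgeo t ht k)
  simp only [hacc]
  have hS : ∑ p, ∑ q, pd q (fun y => ω y p) (γ t) * v p * v q =
      ∑ p, ∑ q, pd p (fun y => ω y q) (γ t) * v p * v q := by
    rw [Finset.sum_comm]
    exact Finset.sum_congr rfl fun p _ => Finset.sum_congr rfl fun q _ => by ring
  have hΓ : ∑ k, ω (γ t) k * ∑ i, ∑ j, Γ k i j (γ t) * v i * v j =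
      ∑ p, ∑ q, (∑ k, Γ k p q (γ t) * ω (γ t) k) * v p * v q := by
    simp only [Finset.mul_sum, Finset.sum_mul]
    rw [Finset.sum_comm]
    refine Finset.sum_congr rfl fun p _ => ?_
    rw [Finset.sum_comm]
    exact Finset.sum_congr rfl fun q _ => Finset.sum_congr rfl fun k _ => by ring
  have hL : ∑ p, ∑ q, dsym Γ ω p q (γ t) * v p * v q =
      (∑ p, ∑ q, pd p (fun y => ω y q) (γ t) * v p * v q +
        ∑ p, ∑ q, pd q (fun y => ω y p) (γ t) * v p * v q) / 2 -
      ∑ p, ∑ q, (∑ k, Γ k p q (γ t) * ω (γ t) k) * v p * v q := by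
    rw [← Finset.sum_add_distrib, Finset.sum_div, ← Finset.sum_sub_distrib]
    refine Finset.sum_congr rfl fun p _ => ?_
    rw [← Finset.sum_add_distrib, Finset.sum_div, ← Finset.sum_sub_distrib]
    refine Finset.sum_congr rfl fun q _ => ?_
    unfold dsym
    ring
  rw [hL, hS, ← hΓ, Finset.sum_add_distrib]
  have hP : ∑ k, (∑ p, v p * pd p (fun y => ω y k) (γ t)) * v k =
      ∑ p, ∑ q, pd p (fun y => ω y q) (γ t) * v p * v q := by
    simp only [Finset.sum_mul]
    rw [Finset.sum_comm]
    exact Finset.sum_congr rfl fun p _ => Finset.sum_congr rfl fun q _ => by ring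
  have hN : ∑ k, ω (γ t) k * -∑ i, ∑ j, Γ k i j (γ t) * v i * v j =
      -∑ k, ω (γ t) k * ∑ i, ∑ j, Γ k i j (γ t) * v i * v j := by
    simp only [mul_neg, Finset.sum_neg_distrib]
  rw [hP, hN]
  ring

/-- A solution of a homogeneous linear scalar equation which vanishes at `0` is zero. -/
theorem eq_zero_of_hasDerivAt_mul_self {I : Set ℝ} (hI : IsOpen I) (hIc : I.OrdConnected)
    (h0 : (0 : ℝ) ∈ I) {a f : ℝ → ℝ} (ha : ContinuousOn a I)
    (hf : ∀ t ∈ I, HasDerivAt f (a t * f t) t) (hf0 : f 0 = 0) {t : ℝ} (ht : t ∈ I) :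
    f t = 0 := by
  have hA : ∀ s ∈ I, HasDerivAt (fun u => ∫ x in (0 : ℝ)..u, a x) (a s) s := fun s hs =>
    intervalIntegral.integral_hasDerivAt_right
      (ha.mono (hIc.uIcc_subset h0 hs)).intervalIntegrable
      (ha.stronglyMeasurableAtFilter hI s hs) (ha.continuousAt (hI.mem_nhds hs))
  have hg : ∀ s ∈ I, HasDerivAt (fun u => f u * Real.exp (-∫ x in (0 : ℝ)..u, a x)) 0 s := by
    intro s hs
    refine ((hf s hs).mul (hA s hs).neg.exp).congr_deriv ?_
    simp only [Pi.neg_apply]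
    ring
  have hconst := hI.is_const_of_deriv_eq_zero hIc.isPreconnected
    (fun s hs => (hg s hs).differentiableAt.differentiableWithinAt)
    (fun s hs => (hg s hs).deriv) ht h0
  simpa [hf0] using hconst

/-- Geodesics with prescribed initial position and velocity exist for short time. -/
theorem IsTorsionFreeConn.exists_isGeodesicOn {n : ℕ} {U : Set (Fin n → ℝ)} (hU : IsOpen U)
    {Γ : Fin n → Fin n → Fin n → (Fin n → ℝ) → ℝ} (hΓ : IsTorsionFreeConn U Γ)
    {x : Fin n → ℝ} (hx : x ∈ U) (v : Fin n → ℝ) :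
    ∃ ε > 0, ∃ γ : ℝ → Fin n → ℝ, IsGeodesicOn U Γ (Set.Ioo (-ε) ε) γ ∧ γ 0 = x ∧
      ∀ k, deriv (fun u => γ u k) 0 = v k := by
  let F : (Fin n → ℝ) × (Fin n → ℝ) → (Fin n → ℝ) × (Fin n → ℝ) := fun z =>
    (z.2, fun k => -∑ i, ∑ j, Γ k i j z.1 * z.2 i * z.2 j)
  have hF : ContDiffOn ℝ 1 F (U ×ˢ Set.univ) := by
    have hG : ∀ k i j, ContDiffOn ℝ 1 (fun z : (Fin n → ℝ) × (Fin n → ℝ) => Γ k i j z.1)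
        (U ×ˢ Set.univ) := fun k i j =>
      ((hΓ.1 k i j).of_le (by exact_mod_cast le_top)).comp contDiff_fst.contDiffOn
        fun z hz => hz.1
    refine contDiff_snd.contDiffOn.prodMk (contDiffOn_pi.2 fun k => ?_)
    refine (ContDiffOn.sum fun i _ => ContDiffOn.sum fun j _ => ?_).neg
    exact ((hG k i j).mul (by fun_prop)).mul (by fun_prop)
  have hopen : IsOpen (U ×ˢ (Set.univ : Set (Fin n → ℝ))) := hU.prod isOpen_univ
  have hFx : ContDiffAt ℝ 1 F (x, v) := hF.contDiffAt (hopen.mem_nhds ⟨hx, trivial⟩)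
  obtain ⟨α, hα0, δ, hδ, hα⟩ :=
    ContDiffAt.exists_forall_mem_closedBall_exists_eq_forall_mem_Ioo_hasDerivAt₀ hFx 0
  have hev : ∀ᶠ t in nhds (0 : ℝ), α t ∈ U ×ˢ (Set.univ : Set (Fin n → ℝ)) :=
    (hα 0 (by constructor <;> linarith)).continuousAt.eventually_mem
      (hopen.mem_nhds (by rw [hα0]; exact ⟨hx, trivial⟩))
  obtain ⟨η, hη, hηU⟩ := Metric.eventually_nhds_iff.1 hev
  set ε := min δ η
  have hε0 : 0 < ε := lt_min hδ hη
  have hmem : ∀ t ∈ Set.Ioo (-ε) ε, α t ∈ U ×ˢ (Set.univ : Set (Fin n → ℝ)) := fun t ht =>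
    hηU (by
      rw [Real.dist_eq, sub_zero]
      exact (abs_lt.2 ht).trans_le (min_le_right _ _))
  have hder : ∀ t ∈ Set.Ioo (-ε) ε, HasDerivAt α (F (α t)) t := fun t ht =>
    hα t ⟨by linarith [ht.1, min_le_left δ η], by linarith [ht.2, min_le_left δ η]⟩
  have hpos : ∀ t ∈ Set.Ioo (-ε) ε, HasDerivAt (fun s => (α s).1) (α t).2 t :=
    fun t ht => (hder t ht).fst
  have hvel : ∀ t ∈ Set.Ioo (-ε) ε, HasDerivAt (fun s => (α s).2) (F (α t)).2 t :=
    fun t ht => (hder t ht).snd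
  have hposk : ∀ t ∈ Set.Ioo (-ε) ε, ∀ k, deriv (fun u => (α u).1 k) t = (α t).2 k :=
    fun t ht k => (hasDerivAt_pi.1 (hpos t ht) k).deriv
  have hαC : ContDiffOn ℝ 1 α (Set.Ioo (-ε) ε) := by
    rw [show (1 : WithTop ℕ∞) = 0 + 1 from rfl, contDiffOn_succ_iff_deriv_of_isOpen isOpen_Ioo]
    have hdiff : DifferentiableOn ℝ α (Set.Ioo (-ε) ε) := fun t ht =>
      (hder t ht).differentiableAt.differentiableWithinAt
    refine ⟨hdiff, by simp, ?_⟩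
    rw [contDiffOn_zero]
    exact (hF.continuousOn.comp hdiff.continuousOn hmem).congr fun t ht => (hder t ht).deriv
  refine ⟨ε, hε0, fun s => (α s).1, ⟨fun t ht => (hmem t ht).1, ?_, fun t ht k => ?_⟩, ?_,
    fun k => ?_⟩
  · rw [show (2 : WithTop ℕ∞) = 1 + 1 by norm_num, contDiffOn_succ_iff_deriv_of_isOpen isOpen_Ioo]
    exact ⟨fun t ht => (hpos t ht).differentiableAt.differentiableWithinAt, by simp,
      hαC.snd.congr fun t ht => (hpos t ht).deriv⟩
  · have heq : (fun s => deriv (fun u => (α u).1 k) s) =ᶠ[nhds t] fun s => (α s).2 k := by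
      filter_upwards [isOpen_Ioo.mem_nhds ht] with s hs using hposk s hs k
    rw [heq.deriv_eq, (hasDerivAt_pi.1 (hvel t ht) k).deriv]
    simp only [hposk t ht, F, neg_add_cancel]
  · simp [hα0]
  · rw [hposk 0 ⟨by linarith, hε0⟩ k, hα0]

/-- For a totally geodesic foliation, `(d^s_Γ ω)(v, v) = 0` whenever `ω v = 0`. -/
theorem TotallyGeodesic.dsym_apply_self_eq_zero {n : ℕ} {U : Set (Fin n → ℝ)} (hU : IsOpen U)
    {Γ : Fin n → Fin n → Fin n → (Fin n → ℝ) → ℝ} (hΓ : IsTorsionFreeConn U Γ)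
    {ω : (Fin n → ℝ) → Fin n → ℝ} (hω : ContDiffOn ℝ (⊤ : ℕ∞) ω U)
    (hgeo : TotallyGeodesic U Γ ω) {x : Fin n → ℝ} (hx : x ∈ U) {v : Fin n → ℝ}
    (hv : ∑ k, ω x k * v k = 0) :
    ∑ p, ∑ q, dsym Γ ω p q x * v p * v q = 0 := by
  obtain ⟨ε, hε, γ, hγ, hγ0, hγv⟩ := hΓ.exists_isGeodesicOn hU hx v
  have h0 : (0 : ℝ) ∈ Set.Ioo (-ε) ε := ⟨by linarith, hε⟩
  have hzero := hgeo _ isOpen_Ioo Set.ordConnected_Ioo h0 γ hγ (by simpa only [hγ0, hγv] using hv)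
  have hd := hγ.hasDerivAt_form_velocity hU isOpen_Ioo hω h0
  simp only [hγ0, hγv] at hd
  refine hd.unique ((hasDerivAt_const (0 : ℝ) (0 : ℝ)).congr_of_eventuallyEq ?_)
  filter_upwards [isOpen_Ioo.mem_nhds h0] with t ht using hzero t ht

/-- The covector `θ` with `Q = θ·w`, for a symmetric form `Q` vanishing on the kernel of `w`:
with `ν = w / |w|²`, it is `θ = 2 Q(ν, ·) - Q(ν, ν) w`. -/
noncomputable def symProdFactor {n : ℕ} (Q : Fin n → Fin n → ℝ) (w : Fin n → ℝ) (p : Fin n) : ℝ :=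
  2 * ((∑ i, Q p i * w i) / ∑ i, w i ^ 2) -
    (∑ i, ∑ j, Q i j * w i * w j) / (∑ i, w i ^ 2) ^ 2 * w p

/-- A nonzero covector has nonzero sum of squares. -/
theorem sum_sq_ne_zero_of_ne_zero {n : ℕ} {w : Fin n → ℝ} (hw : w ≠ 0) : ∑ i, w i ^ 2 ≠ 0 := by
  intro h
  refine hw (funext fun i => ?_)
  simpa using (Finset.sum_eq_zero_iff_of_nonneg fun i _ => sq_nonneg (w i)).1 h i
    (Finset.mem_univ i)

/-- A symmetric form vanishing on the kernel of a nonzero covector is divisible by it. -/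
theorem eq_symProdFactor_mul {n : ℕ} {Q : Fin n → Fin n → ℝ} (hQ : ∀ i j, Q i j = Q j i)
    {w : Fin n → ℝ} (hw : w ≠ 0)
    (h : ∀ v : Fin n → ℝ, ∑ k, w k * v k = 0 → ∑ i, ∑ j, Q i j * v i * v j = 0) (p q : Fin n) :
    Q p q = (symProdFactor Q w p * w q + symProdFactor Q w q * w p) / 2 := by
  have hN := sum_sq_ne_zero_of_ne_zero hw
  set N := ∑ i, w i ^ 2 with hNdef
  let B : (Fin n → ℝ) →ₗ[ℝ] (Fin n → ℝ) →ₗ[ℝ] ℝ := Matrix.toLinearMap₂' ℝ (Matrix.of Q)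
  have hB : ∀ u v, B u v = ∑ i, ∑ j, Q i j * u i * v j := fun u v => by
    simp only [B, Matrix.toLinearMap₂'_apply, Matrix.of_apply, smul_eq_mul]
    exact Finset.sum_congr rfl fun i _ => Finset.sum_congr rfl fun j _ => by ring
  have hBsymm : ∀ u v, B u v = B v u := fun u v => by
    rw [hB, hB, Finset.sum_comm]
    exact Finset.sum_congr rfl fun i _ => Finset.sum_congr rfl fun j _ => by rw [hQ j i]; ring
  let e : Fin n → Fin n → ℝ := fun r => Pi.single r 1
  have hBe : ∀ r s, B (e r) (e s) = Q r s := fun r s => by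
    simp [hB, e, Pi.single_apply]
  have hBw : ∀ r, B (e r) w = ∑ i, Q r i * w i := fun r => by
    simp [hB, e, Pi.single_apply]
  have hBww : B w w = ∑ i, ∑ j, Q i j * w i * w j := hB w w
  let u : Fin n → Fin n → ℝ := fun r => e r - (w r / N) • w
  have hu : ∀ r, ∑ k, w k * u r k = 0 := fun r => by
    have h1 : ∑ k, w k * u r k = w r - w r / N * N := by
      simp only [u, e, Pi.sub_apply, Pi.smul_apply, smul_eq_mul, mul_sub, Finset.sum_sub_distrib]
      congr 1
      · simp [Pi.single_apply]
      · rw [hNdef, Finset.mul_sum]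
        exact Finset.sum_congr rfl fun k _ => by ring
    rw [h1, div_mul_cancel₀ _ hN, sub_self]
  have hself : ∀ v : Fin n → ℝ, ∑ k, w k * v k = 0 → B v v = 0 := fun v hv => by
    rw [hB]; exact h v hv
  have hadd : B (u p + u q) (u p + u q) = 0 := hself _ (by
    simp only [Pi.add_apply, mul_add, Finset.sum_add_distrib, hu, add_zero])
  have hpq : B (u p) (u q) = 0 := by
    have hp := hself _ (hu p)
    have hq := hself _ (hu q)
    have hs := hBsymm (u q) (u p)
    simp only [map_add, LinearMap.add_apply] at hadd
    linarith
  have hexp : B (u p) (u q) = Q p q - w q / N * B (e p) w - w p / N * B (e q) w +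
      w p / N * (w q / N) * B w w := by
    simp only [u, map_sub, map_smul, LinearMap.sub_apply, LinearMap.smul_apply, smul_eq_mul, hBe,
      hBsymm w (e q)]
    ring
  rw [hpq, hBw, hBw, hBww] at hexp
  unfold symProdFactor
  rw [← hNdef]
  field_simp at hexp ⊢
  linarith

/-- The components of the symmetric covariant differential are smooth. -/
theorem contDiffOn_dsym {n : ℕ} {U : Set (Fin n → ℝ)} (hU : IsOpen U)
    {Γ : Fin n → Fin n → Fin n → (Fin n → ℝ) → ℝ} (hΓ : IsTorsionFreeConn U Γ)
    {ω : (Fin n → ℝ) → Fin n → ℝ} (hω : ContDiffOn ℝ (⊤ : ℕ∞) ω U) (p q : Fin n) :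
    ContDiffOn ℝ (⊤ : ℕ∞) (dsym Γ ω p q) U := by
  have hωk := contDiffOn_pi.1 hω
  have hpd : ∀ i k, ContDiffOn ℝ (⊤ : ℕ∞) (pd i fun y => ω y k) U := fun i k =>
    ((hωk k).fderiv_of_isOpen hU (by simp)).clm_apply contDiffOn_const
  exact (((hpd p q).add (hpd q p)).div_const 2).sub
    (ContDiffOn.sum fun k _ => (hΓ.1 k p q).mul (hωk k))

/-- The components of the symmetric covariant differential are symmetric. -/
theorem dsym_symm {n : ℕ} {U : Set (Fin n → ℝ)}
    {Γ : Fin n → Fin n → Fin n → (Fin n → ℝ) → ℝ} (hΓ : IsTorsionFreeConn U Γ)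
    (ω : (Fin n → ℝ) → Fin n → ℝ) (p q : Fin n) (x : Fin n → ℝ) :
    dsym Γ ω p q x = dsym Γ ω q p x := by
  simp only [dsym, hΓ.2 _ p q x, add_comm (pd p _ x)]

/-- The foliation of a smooth nonvanishing `1`-form `ω` is totally geodesic iff
`d^s_Γ ω = θ·ω` for some smooth `1`-form `θ`. -/
theorem totallyGeodesic_iff_exists_dsym_eq_symProd {n : ℕ} {U : Set (Fin n → ℝ)} (hU : IsOpen U)
    {Γ : Fin n → Fin n → Fin n → (Fin n → ℝ) → ℝ} (hΓ : IsTorsionFreeConn U Γ)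
    {ω : (Fin n → ℝ) → Fin n → ℝ} (hω : ContDiffOn ℝ (⊤ : ℕ∞) ω U) (hω0 : ∀ x ∈ U, ω x ≠ 0) :
    TotallyGeodesic U Γ ω ↔ ∃ θ : (Fin n → ℝ) → Fin n → ℝ, ContDiffOn ℝ (⊤ : ℕ∞) θ U ∧
      ∀ x ∈ U, ∀ p q, dsym Γ ω p q x = symProd θ ω p q x := by
  constructor
  · intro hgeo
    refine ⟨fun x => symProdFactor (fun p q => dsym Γ ω p q x) (ω x), ?_, fun x hx p q =>
      eq_symProdFactor_mul (fun i j => dsym_symm hΓ ω i j x) (hω0 x hx)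
        (fun v hv => hgeo.dsym_apply_self_eq_zero hU hΓ hω hx hv) p q⟩
    have hωk := contDiffOn_pi.1 hω
    have hds := contDiffOn_dsym hU hΓ hω
    have hN : ContDiffOn ℝ (⊤ : ℕ∞) (fun x => ∑ i, ω x i ^ 2) U :=
      ContDiffOn.sum fun i _ => (hωk i).pow 2
    have hN0 : ∀ x ∈ U, ∑ i, ω x i ^ 2 ≠ 0 := fun x hx => sum_sq_ne_zero_of_ne_zero (hω0 x hx)
    refine contDiffOn_pi.2 fun p => ?_
    refine (contDiffOn_const.mul ((ContDiffOn.sum fun i _ => (hds p i).mul (hωk i)).div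
      hN hN0)).sub (ContDiffOn.mul (ContDiffOn.div ?_ (hN.pow 2)
        fun x hx => pow_ne_zero 2 (hN0 x hx)) (hωk p))
    exact ContDiffOn.sum fun i _ => ContDiffOn.sum fun j _ =>
      ((hds i j).mul (hωk i)).mul (hωk j)
  · rintro ⟨θ, hθ, hds⟩ I hI hIc h0 γ hγ hinit t ht
    have hcont : ContinuousOn (fun s => ∑ p, θ (γ s) p * deriv (fun u => γ u p) s) I := by
      refine continuousOn_finsetSum _ fun p _ => ContinuousOn.mul ?_ ?_
      · exact (contDiffOn_pi.1 hθ p).continuousOn.comp hγ.2.1.continuousOn hγ.1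
      · exact (contDiffOn_pi.1 hγ.2.1 p).continuousOn_deriv_of_isOpen hI (by norm_num)
    refine eq_zero_of_hasDerivAt_mul_self
      (f := fun s => ∑ k, ω (γ s) k * deriv (fun u => γ u k) s) hI hIc h0 hcont (fun s hs => ?_) hinit ht
    refine (hγ.hasDerivAt_form_velocity hU hI hω hs).congr_deriv ?_
    simp only [hds _ (hγ.1 s hs), symProd]
    set v : Fin n → ℝ := fun k => deriv (fun u => γ u k) s
    have hsplit : ∑ p, ∑ q, (θ (γ s) p * ω (γ s) q + θ (γ s) q * ω (γ s) p) / 2 * v p * v q =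
        (∑ p, ∑ q, θ (γ s) p * v p * (ω (γ s) q * v q) +
          ∑ p, ∑ q, ω (γ s) p * v p * (θ (γ s) q * v q)) / 2 := by
      rw [← Finset.sum_add_distrib, Finset.sum_div]
      refine Finset.sum_congr rfl fun p _ => ?_
      rw [← Finset.sum_add_distrib, Finset.sum_div]
      exact Finset.sum_congr rfl fun q _ => by ring
    rw [hsplit, ← Finset.sum_mul_sum, ← Finset.sum_mul_sum]
    ring

/-- a `d`-web `⟨ω₁, …, ω_d⟩` is geodesic for a torsion-free connection `Γ`
iff `d^s_Γ ωᵢ = θᵢ·ωᵢ` for some smooth 1-forms `θ₁, …, θ_d`. -/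
theorem statement1 {n d : ℕ} (hn : 2 ≤ n) (U : Set (Fin n → ℝ)) (hU : IsOpen U)
    (hUconn : IsConnected U)
    (ωs : Fin d → (Fin n → ℝ) → Fin n → ℝ) (hweb : IsWeb U ωs)
    (Γ : Fin n → Fin n → Fin n → (Fin n → ℝ) → ℝ) (hΓ : IsTorsionFreeConn U Γ) :
    (∀ i, TotallyGeodesic U Γ (ωs i)) ↔
      ∃ θ : Fin d → (Fin n → ℝ) → Fin n → ℝ,
        ∀ i, ContDiffOn ℝ (⊤ : ℕ∞) (θ i) U ∧
          ∀ x ∈ U, ∀ p q, dsym Γ (ωs i) p q x = symProd (θ i) (ωs i) p q x := by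
  have h : ∀ i, _ := fun i =>
    totallyGeodesic_iff_exists_dsym_eq_symProd hU hΓ (hweb.1 i).1 (hweb.1 i).2.1
  exact (forall_congr' h).trans Classical.skolem
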